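/- Let f : ℝⁿ → ℝⁿ, let b ∈ ℝⁿ, let Ψ : ℝⁿ → ℝⁿ be differentiable with DΨ(x)·f(x) = b for all x (a straightening map for f), and let A : ℝ → Matrix (Fin n) (Fin n) ℝ be differentiable with A(t) invertible for every t. If z : ℝ → ℝⁿ is differentiable with z'(t) = f*(t, z(t)) for all t, where f* is the gauge transform of f by A, then y(t) := A(t)·Ψ(A(t)⁻¹·z(t)) satisfies the nonautonomous linear inhomogeneous equation y'(t) = A'(t)·A(t)⁻¹·y(t) + A(t)·b for all t. -/

import Mathlib

open Matrix

/-! Write `z = A x`. By the product rule the gauge term `A' A⁻¹ z` of `f*` is exactly the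
contribution of the moving frame, so `z` solves `ż = f*(t, z)` if and only if `x` solves `ẋ = f(x)`.
Hence `A⁻¹ z` is a trajectory of `f`, its image under `Ψ` is a trajectory of the constant field `b`,
and applying `A` again gives a trajectory of the gauge transform of that field. -/

section GaugeTransform

variable {𝕜 E : Type*} [NontriviallyNormedField 𝕜] [NormedAddCommGroup E] [NormedSpace 𝕜 E]

/-- The gauge transform `f*(t, ·)` of a vector field `f` at a fixed time `t`. Only the value
`A = A(t)` of the gauge and its velocity `A' = A'(t)` enter, so time is not a parameter. -/
def gaugeTransform (A : E ≃L[𝕜] E) (A' : E →L[𝕜] E) (f : E → E) (y : E) : E :=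
  A' (A.symm y) + A (f (A.symm y))

variable {A : 𝕜 → E ≃L[𝕜] E} {A' : E →L[𝕜] E} {f : E → E} {t : 𝕜}

theorem hasDerivAt_coe_symm [CompleteSpace E]
    (hA : HasDerivAt (fun s => (A s : E →L[𝕜] E)) A' t) :
    HasDerivAt (fun s => ((A s).symm : E →L[𝕜] E))
      (-((A t).symm ∘L A' ∘L (A t).symm : E →L[𝕜] E)) t := by
  have hinv : HasFDerivAt Ring.inverse _ (A t : E →L[𝕜] E) :=
    hasFDerivAt_ringInverse (𝕜 := 𝕜) (A t).toUnit
  simpa only [Function.comp_def, ContinuousLinearMap.ringInverse_equiv,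
    ContinuousLinearMap.inverse_equiv] using! hinv.comp_hasDerivAt t hA

theorem hasDerivAt_apply_gaugeTransform {x : 𝕜 → E}
    (hA : HasDerivAt (fun s => (A s : E →L[𝕜] E)) A' t) (hx : HasDerivAt x (f (x t)) t) :
    HasDerivAt (fun s => A s (x s)) (gaugeTransform (A t) A' f (A t (x t))) t := by
  simpa [gaugeTransform] using hA.clm_apply hx

theorem hasDerivAt_symm_apply_of_gaugeTransform [CompleteSpace E] {z : 𝕜 → E}
    (hA : HasDerivAt (fun s => (A s : E →L[𝕜] E)) A' t)
    (hz : HasDerivAt z (gaugeTransform (A t) A' f (z t)) t) :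
    HasDerivAt (fun s => (A s).symm (z s)) (f ((A t).symm (z t))) t := by
  simpa [gaugeTransform] using (hasDerivAt_coe_symm hA).clm_apply hz

theorem gauge_transform_straightening_general [CompleteSpace E]
    {g Ψ : E → E} {Ψ' : E →L[𝕜] E} {z : 𝕜 → E}
    (hA : HasDerivAt (fun s => (A s : E →L[𝕜] E)) A' t)
    (hΨ : HasFDerivAt Ψ Ψ' ((A t).symm (z t)))
    (hfg : Ψ' (f ((A t).symm (z t))) = g (Ψ ((A t).symm (z t))))
    (hz : HasDerivAt z (gaugeTransform (A t) A' f (z t)) t) :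
    HasDerivAt (fun s => A s (Ψ ((A s).symm (z s))))
      (gaugeTransform (A t) A' g (A t (Ψ ((A t).symm (z t))))) t := by
  have hx : HasDerivAt (fun s => (A s).symm (z s)) (f ((A t).symm (z t))) t :=
    hasDerivAt_symm_apply_of_gaugeTransform hA hz
  have hΨx : HasDerivAt (fun s => Ψ ((A s).symm (z s))) (g (Ψ ((A t).symm (z t)))) t :=
    hfg ▸ hΨ.comp_hasDerivAt t hx
  exact hasDerivAt_apply_gaugeTransform hA hΨx

end GaugeTransform

section Matrix

variable {𝕜 m n : Type*} [NontriviallyNormedField 𝕜] [CompleteSpace 𝕜]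
  [Finite m] [Fintype n] [DecidableEq n]

/-- Multiplication by an invertible matrix as a continuous linear equivalence, which lets a curve of
invertible matrices act as a gauge. Its inverse is multiplication by `A⁻¹`, definitionally. -/
noncomputable def mulVecEquiv {A : Matrix n n 𝕜} (hA : IsUnit A) : (n → 𝕜) ≃L[𝕜] (n → 𝕜) :=
  have hdet : IsUnit A.det := (isUnit_iff_isUnit_det A).1 hA
  (toLin'OfInv (nonsing_inv_mul A hdet) (mul_nonsing_inv A hdet)).toContinuousLinearEquiv

theorem hasDerivAt_toLin' {A : 𝕜 → Matrix m n 𝕜} {A' : Matrix m n 𝕜} {t : 𝕜}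
    (hA : ∀ i j, HasDerivAt (fun s => A s i j) (A' i j) t) :
    HasDerivAt (fun s => (toLin' (A s)).toContinuousLinearMap)
      (toLin' A').toContinuousLinearMap t := by
  have := Fintype.ofFinite m
  -- `Matrix` carries no global norm, so differentiate in the normed space `m → n → 𝕜`.
  have hentries : HasDerivAt (F := m → n → 𝕜) A A' t :=
    hasDerivAt_pi.2 fun i => hasDerivAt_pi.2 (hA i)
  let toCLM : (m → n → 𝕜) →L[𝕜] (n → 𝕜) →L[𝕜] (m → 𝕜) :=
    (toLin' ≪≫ₗ LinearMap.toContinuousLinearMap).toLinearMap.toContinuousLinearMap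
  exact toCLM.hasFDerivAt.comp_hasDerivAt t hentries

end Matrix

/-- **Straightening transfers to gauge transforms.**
If `Ψ` straightens `ẋ = f(x)` to the constant equation `ẋ = b` (i.e. `DΨ(x)·f(x) = b` for all
`x`) and `z` solves the gauge transform `f*` of `f` by `A(t)`, then
`y(t) := A(t)·Ψ(A(t)⁻¹·z(t))` solves the nonautonomous linear inhomogeneous equation
`ẏ = A'(t)·A(t)⁻¹·y + A(t)·b`. -/
theorem gauge_transform_straightening {n : ℕ}
    (f : (Fin n → ℝ) → (Fin n → ℝ)) (b : Fin n → ℝ)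
    (Ψ : (Fin n → ℝ) → (Fin n → ℝ))
    (Ψ' : (Fin n → ℝ) → ((Fin n → ℝ) →L[ℝ] (Fin n → ℝ)))
    (hΨ : ∀ x, HasFDerivAt Ψ (Ψ' x) x)
    (hstraight : ∀ x, Ψ' x (f x) = b)
    (A A' : ℝ → Matrix (Fin n) (Fin n) ℝ)
    (hA : ∀ t, ∀ i j, HasDerivAt (fun s => A s i j) (A' t i j) t)
    (hAinv : ∀ t, IsUnit (A t))
    (z : ℝ → Fin n → ℝ)
    (hz : ∀ t, HasDerivAt z
      ((A' t).mulVec ((A t)⁻¹.mulVec (z t)) +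
        (A t).mulVec (f ((A t)⁻¹.mulVec (z t)))) t) :
    ∀ t, HasDerivAt (fun s => (A s).mulVec (Ψ ((A s)⁻¹.mulVec (z s))))
      ((A' t).mulVec ((A t)⁻¹.mulVec ((A t).mulVec (Ψ ((A t)⁻¹.mulVec (z t))))) +
        (A t).mulVec b) t := by
  intro t
  let gauge (s : ℝ) : (Fin n → ℝ) ≃L[ℝ] (Fin n → ℝ) := mulVecEquiv (hAinv s)
  have hgauge : HasDerivAt (fun s => (gauge s : (Fin n → ℝ) →L[ℝ] (Fin n → ℝ)))
      (toLin' (A' t)).toContinuousLinearMap t := hasDerivAt_toLin' (hA t)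
  exact gauge_transform_straightening_general (A := gauge) (g := fun _ => b) hgauge
    (hΨ _) (hstraight _) (hz t)
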